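/- Let d ≥ 3 and let (a,w,b) ∈ 𝒯 be such that w has exactly two left extensions and exactly two right extensions in u_d. Let w′ be the offspring of w and let s be the longest common suffix of φ(a) and φ(d−1). If r is a return word to w in u_d, then s·φ(r) has s as a suffix and the word s·φ(r)·s^{−1} (i.e., the word r′ with r′s = sφ(r)) is a return word to w′ in u_d; in particular, the Parikh vector of this return word to w′ equals M r⃗, where r⃗ is the Parikh vector of r and M is the incidence matrix of φ_d. -/

import Mathlib

namespace RichRT

variable {A : Type*}

/-- The word `w` occurs in the sequence `u` at position `j`. -/
def OccursAt (w : List A) (u : ℕ → A) (j : ℕ) : Prop :=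
  w = (List.range w.length).map fun t => u (j + t)

/-- `w` is a factor of the infinite sequence `u`. -/
def IsFactorS (w : List A) (u : ℕ → A) : Prop :=
  ∃ j : ℕ, OccursAt w u j

/-- `u` is recurrent: every factor occurs infinitely often. -/
def Recurrent (u : ℕ → A) : Prop :=
  ∀ w : List A, IsFactorS w u → ∀ N : ℕ, ∃ j, N ≤ j ∧ OccursAt w u j

/-- The number of distinct palindromic factors of a finite word. -/
noncomputable def palCount (w : List A) : ℕ :=
  Set.ncard {p : List A | p <:+: w ∧ p.reverse = p}

/-- A finite word of length `n` is rich if it has exactly `n+1` palindromic factors. -/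
def RichWord (w : List A) : Prop := palCount w = w.length + 1

/-- A sequence is rich if all its factors are rich. -/
def RichSeq (u : ℕ → A) : Prop := ∀ w : List A, IsFactorS w u → RichWord w

/-- The prefix of length `k` of the periodic sequence `vvv⋯`. -/
def powPref (v : List A) (k : ℕ) : List A := ((List.replicate k v).flatten).take k

/-- The set of exponents `k/|v|` of fractional powers `v^(k/|v|)` occurring in `u`,
with `|v| ≥ n`. -/
def expSet (u : ℕ → A) (n : ℕ) : Set ℝ :=
  {x | ∃ (v : List A) (k : ℕ), v ≠ [] ∧ n ≤ v.length ∧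
    IsFactorS (powPref v k) u ∧ x = (k : ℝ) / (v.length : ℝ)}

/-- The critical exponent of a sequence, with values in `EReal`. -/
noncomputable def critExp (u : ℕ → A) : EReal :=
  sSup ((fun x : ℝ => (x : EReal)) '' expSet u 0)

/-- The asymptotic critical exponent of a sequence: `⊤` if the critical exponent is `⊤`,
otherwise the limit (= infimum, by monotonicity) over `n` of the suprema of exponents of
powers `v^e` with `|v| ≥ n`. -/
noncomputable def acritExp (u : ℕ → A) : EReal :=
  if critExp u = ⊤ then ⊤
  else ⨅ n : ℕ, sSup ((fun x : ℝ => (x : EReal)) '' expSet u n)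

/-- The morphism `φ_d` on letters: `i ↦ 0(i+1)` for `i < d-1`, `d-1 ↦ 0(d-1)(d-1)`. -/
def phiL (d : ℕ) (i : ℕ) : List ℕ :=
  if i < d - 1 then [0, i + 1] else [0, d - 1, d - 1]

/-- The morphism `φ_d` on words. -/
def phiW (d : ℕ) (w : List ℕ) : List ℕ := w.flatMap (phiL d)

/-- `u` is the fixed point of `φ_d`: it begins with `0` and `φ_d(u) = u`, i.e. the image
of every prefix of `u` is again a prefix of `u`. -/
def IsPhiFixed (d : ℕ) (u : ℕ → ℕ) : Prop :=
  u 0 = 0 ∧ ∀ m : ℕ, OccursAt (phiW d ((List.range m).map u)) u 0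

/-- Left extensions of `w` in `u`. -/
def Lext (u : ℕ → ℕ) (w : List ℕ) : Set (List ℕ) :=
  {x | ∃ i : ℕ, x = i :: w ∧ IsFactorS x u}

/-- Right extensions of `w` in `u`. -/
def Rext (u : ℕ → ℕ) (w : List ℕ) : Set (List ℕ) :=
  {x | ∃ i : ℕ, x = w ++ [i] ∧ IsFactorS x u}

/-- Both-sided extensions of `w` in `u`. -/
def Bext (u : ℕ → ℕ) (w : List ℕ) : Set (List ℕ) :=
  {x | ∃ i j : ℕ, x = i :: (w ++ [j]) ∧ IsFactorS x u}

/-- `w` is a bispecial factor of `u`. -/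
def Bispecial (u : ℕ → ℕ) (w : List ℕ) : Prop :=
  IsFactorS w u ∧ 2 ≤ (Lext u w).ncard ∧ 2 ≤ (Rext u w).ncard

/-- The bilateral order `b(w) = #Bext(w) − #Lext(w) − #Rext(w) + 1`. -/
noncomputable def bord (u : ℕ → ℕ) (w : List ℕ) : ℤ :=
  ((Bext u w).ncard : ℤ) - ((Lext u w).ncard : ℤ) - ((Rext u w).ncard : ℤ) + 1

/-- The palindromes `F_0 = ε`, `F_i = φ(F_{i-1})0`. -/
def Fword (d : ℕ) : ℕ → List ℕ
  | 0 => []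
  | i + 1 => phiW d (Fword d i) ++ [0]

/-- Membership in the set `𝒯` of bispecial triplets. -/
def TripleMem (d : ℕ) (u : ℕ → ℕ) (t : ℕ × List ℕ × ℕ) : Prop :=
  Bispecial u t.2.1 ∧ t.1 < d - 1 ∧ t.2.2 < d - 1 ∧
    IsFactorS (t.1 :: t.2.1) u ∧ IsFactorS (t.2.1 ++ [t.2.2]) u

/-- The map `f` on triplets. -/
def fmap (d : ℕ) (t : ℕ × List ℕ × ℕ) : ℕ × List ℕ × ℕ :=
  ((t.1 + 1) % (d - 1),
   (if t.1 = d - 2 then [d - 1] else []) ++ phiW d t.2.1 ++ [0] ++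
     (if t.2.2 = d - 2 then [d - 1] else []),
   (t.2.2 + 1) % (d - 1))

/-- The initial triplets `T_k = (0, ε, k)` for `k ≤ d-2` and `T_{d-1} = (0, d-1, 0)`. -/
def Tinit (d k : ℕ) : ℕ × List ℕ × ℕ :=
  if k = d - 1 then (0, [d - 1], 0) else (0, ([] : List ℕ), k)

/-- The Parikh vector of a word. -/
def parikh (d : ℕ) (w : List ℕ) : Fin d → ℕ := fun i => w.count (i : ℕ)

/-- The incidence matrix of `φ_d`. -/
def Mmat (d : ℕ) : Matrix (Fin d) (Fin d) ℕ := fun i j => (phiL d (j : ℕ)).count (i : ℕ)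

/-- `r` is a return word to `w` in `u`. -/
def ReturnWord (u : ℕ → ℕ) (w r : List ℕ) : Prop :=
  ∃ j ℓ : ℕ, j < ℓ ∧ OccursAt w u j ∧ OccursAt w u ℓ ∧
    (∀ m, j < m → m < ℓ → ¬ OccursAt w u m) ∧
    r = (List.range (ℓ - j)).map fun t => u (j + t)

/-- `R` is a complete return word to `w` in `u`. -/
def CompleteReturn (u : ℕ → ℕ) (w R : List ℕ) : Prop :=
  ∃ r : List ℕ, ReturnWord u w r ∧ R = r ++ w

theorem occ_iff (w : List A) (u : ℕ → A) (j : ℕ) :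
    OccursAt w u j ↔ ∀ t (h : t < w.length), w[t] = u (j + t) := by
  unfold OccursAt
  constructor
  · intro h t ht
    have := congrArg (fun l => l[t]?) h
    simp only [List.getElem?_eq_getElem ht, List.getElem?_map, List.getElem?_range ht] at this
    simpa using this
  · intro h
    apply List.ext_getElem
    · simp
    · intro t h1 h2
      simp [h t h1]

theorem occ_nil (u : ℕ → A) (j : ℕ) : OccursAt ([] : List A) u j := by simp [OccursAt]

theorem occ_cons (x : A) (w : List A) (u : ℕ → A) (j : ℕ) :
    OccursAt (x :: w) u j ↔ u j = x ∧ OccursAt w u (j + 1) := by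
  rw [occ_iff, occ_iff]
  constructor
  · intro h
    refine ⟨by have h0 := h 0 (by simp); simp only [List.getElem_cons_zero, add_zero] at h0; exact h0.symm,
      fun t ht => ?_⟩
    have := h (t + 1) (by simpa using ht)
    simp only [List.getElem_cons_succ] at this
    rw [this]; congr 1; omega
  · rintro ⟨h0, h⟩ t ht
    cases t with
    | zero => simpa using h0.symm
    | succ t =>
      simp only [List.getElem_cons_succ]
      rw [h t (by simpa using ht)]; congr 1; omega

theorem occ_append (w v : List A) (u : ℕ → A) (j : ℕ) :
    OccursAt (w ++ v) u j ↔ OccursAt w u j ∧ OccursAt v u (j + w.length) := by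
  induction w generalizing j with
  | nil => simp [occ_nil]
  | cons x w ih =>
    simp only [List.cons_append, occ_cons, ih, List.length_cons, and_assoc]
    rw [show j + 1 + w.length = j + (w.length + 1) by omega]

/-- the factor of `u` of length `n` at position `j` -/
def seg (u : ℕ → A) (j n : ℕ) : List A := (List.range n).map fun t => u (j + t)

theorem seg_length (u : ℕ → A) (j n : ℕ) : (seg u j n).length = n := by simp [seg]

theorem occ_seg (u : ℕ → A) (j n i : ℕ) :
    OccursAt (seg u j n) u i ↔ ∀ t < n, u (i + t) = u (j + t) := by
  rw [occ_iff]
  simp only [seg_length]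
  constructor
  · intro h t ht
    have := h t ht
    simpa [seg] using this.symm
  · intro h t ht
    simpa [seg] using (h t ht).symm

theorem occ_eq_seg {w : List A} {u : ℕ → A} {j : ℕ} (h : OccursAt w u j) :
    w = seg u j w.length := h

theorem occ_transfer {w : List A} {u : ℕ → A} {i j : ℕ} (h : OccursAt w u i)
    (hh : ∀ t < w.length, u (j + t) = u (i + t)) : OccursAt w u j := by
  rw [occ_iff] at h ⊢
  intro t ht
  rw [h t ht, hh t ht]

/-- starting position of the `k`-th block -/
def PP (d : ℕ) (u : ℕ → ℕ) (k : ℕ) : ℕ := (phiW d ((List.range k).map u)).length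

theorem phiW_append (d : ℕ) (v w : List ℕ) : phiW d (v ++ w) = phiW d v ++ phiW d w := by
  simp [phiW]

theorem phiW_cons (d x : ℕ) (w : List ℕ) : phiW d (x :: w) = phiL d x ++ phiW d w := by
  simp [phiW]

theorem phiW_nil (d : ℕ) : phiW d [] = [] := rfl

theorem PP_zero (d : ℕ) (u : ℕ → ℕ) : PP d u 0 = 0 := rfl

theorem PP_succ' (d : ℕ) (u : ℕ → ℕ) (k : ℕ) :
    PP d u (k + 1) = PP d u k + (phiL d (u k)).length := by
  simp [PP, List.range_succ, phiW_append, phiW_cons, phiW_nil]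

theorem PP_succ (d : ℕ) (u : ℕ → ℕ) (k : ℕ) :
    PP d u (k + 1) = PP d u k + (if u k < d - 1 then 2 else 3) := by
  rw [PP_succ']
  unfold phiL
  split_ifs <;> rfl

theorem PP_mono (d : ℕ) (u : ℕ → ℕ) : StrictMono (PP d u) := by
  apply strictMono_nat_of_lt_succ
  intro k
  rw [PP_succ]; split_ifs <;> omega

theorem PP_add (d : ℕ) (u : ℕ → ℕ) (k m : ℕ) : PP d u k + 2 * m ≤ PP d u (k + m) := by
  induction m with
  | zero => simp
  | succ m ih => rw [← add_assoc, PP_succ]; split_ifs <;> omega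

theorem occ_block {d : ℕ} {u : ℕ → ℕ} (hu : IsPhiFixed d u) (k : ℕ) :
    OccursAt (phiL d (u k)) u (PP d u k) := by
  have h := hu.2 (k + 1)
  rw [List.range_succ, List.map_append, phiW_append, occ_append] at h
  simpa [phiW, PP] using h.2

theorem u_P0 {d : ℕ} {u : ℕ → ℕ} (hu : IsPhiFixed d u) (k : ℕ) : u (PP d u k) = 0 := by
  have h := occ_block hu k
  unfold phiL at h
  split_ifs at h <;> exact ((occ_cons _ _ _ _).1 h).1

theorem u_P1 {d : ℕ} {u : ℕ → ℕ} (hu : IsPhiFixed d u) (k : ℕ) :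
    u (PP d u k + 1) = if u k < d - 1 then u k + 1 else d - 1 := by
  have h := occ_block hu k
  unfold phiL at h
  split_ifs at h ⊢ <;> simp only [occ_cons] at h <;> exact h.2.1

theorem u_P2 {d : ℕ} {u : ℕ → ℕ} (hu : IsPhiFixed d u) (k : ℕ) (hk : ¬ u k < d - 1) :
    u (PP d u k + 2) = d - 1 := by
  have h := occ_block hu k
  unfold phiL at h
  rw [if_neg hk] at h
  simp only [occ_cons] at h
  exact h.2.2.1

theorem block {d : ℕ} {u : ℕ → ℕ} (n : ℕ) :
    ∃ k, n = PP d u k ∨ n = PP d u k + 1 ∨ (n = PP d u k + 2 ∧ ¬ u k < d - 1) := by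
  induction n with
  | zero => exact ⟨0, Or.inl rfl⟩
  | succ n ih =>
    obtain ⟨k, h⟩ := ih
    have hs := PP_succ d u k
    by_cases hk : u k < d - 1
    · rw [if_pos hk] at hs
      rcases h with h | h | h
      · exact ⟨k, by omega⟩
      · exact ⟨k + 1, by omega⟩
      · exact absurd hk h.2
    · rw [if_neg hk] at hs
      rcases h with h | h | h
      · exact ⟨k, by omega⟩
      · exact ⟨k, by omega⟩
      · exact ⟨k + 1, by omega⟩

theorem u_lt {d : ℕ} (hd : 3 ≤ d) {u : ℕ → ℕ} (hu : IsPhiFixed d u) (n : ℕ) : u n < d := by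
  obtain ⟨k, h | h | h⟩ := block (d := d) (u := u) n
  · rw [h, u_P0 hu]; omega
  · rw [h, u_P1 hu]; split_ifs <;> omega
  · rw [h.1, u_P2 hu k h.2]; omega

theorem zero_block {d : ℕ} (hd : 3 ≤ d) {u : ℕ → ℕ} (hu : IsPhiFixed d u) (n : ℕ)
    (hn : u n = 0) : ∃ k, n = PP d u k := by
  obtain ⟨k, h | h | h⟩ := block (d := d) (u := u) n
  · exact ⟨k, h⟩
  · rw [h, u_P1 hu] at hn; split_ifs at hn <;> omega
  · rw [h.1, u_P2 hu k h.2] at hn; omega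

/-- a letter strictly between `0` and `d-1` is followed by `0` -/
theorem mid_next {d : ℕ} {u : ℕ → ℕ} (hu : IsPhiFixed d u) (n : ℕ)
    (h0 : u n ≠ 0) (h1 : u n < d - 1) : u (n + 1) = 0 := by
  obtain ⟨k, h | h | h⟩ := block (d := d) (u := u) n
  · rw [h, u_P0 hu] at h0; omega
  · have h2 := u_P1 hu k
    rw [← h] at h2
    have h3 := PP_succ d u k
    split_ifs at h2 h3
    · rw [h, show PP d u k + 1 + 1 = PP d u (k + 1) by omega, u_P0 hu]
    · omega
  · rw [h.1, u_P2 hu k h.2] at h1; omega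

/-- the last letter of a block -/
theorem u_last {d : ℕ} {u : ℕ → ℕ} (hu : IsPhiFixed d u) (k : ℕ) :
    u (PP d u (k + 1) - 1) = if u k < d - 1 then u k + 1 else d - 1 := by
  have h3 := PP_succ d u k
  have h1 := u_P1 hu k
  split_ifs at h1 h3 ⊢ with h
  · rw [h3, ← h1]; congr 1
  · rw [h3, ← u_P2 hu k h]; congr 1

theorem occ_phi {d : ℕ} {u : ℕ → ℕ} (hu : IsPhiFixed d u) (w : List ℕ) (k : ℕ)
    (h : OccursAt w u k) :
    OccursAt (phiW d w) u (PP d u k) ∧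
      PP d u (k + w.length) = PP d u k + (phiW d w).length := by
  induction w generalizing k with
  | nil => exact ⟨occ_nil _ _, rfl⟩
  | cons x w ih =>
    rw [occ_cons] at h
    obtain ⟨h1, h2⟩ := ih (k + 1) h.2
    have hs := PP_succ' d u k
    have hb := occ_block hu k
    rw [h.1] at hs hb
    rw [phiW_cons, occ_append, ← hs]
    refine ⟨⟨hb, h1⟩, ?_⟩
    rw [List.length_cons, List.length_append, show k + (w.length + 1) = k + 1 + w.length by omega,
      h2]
    omega

theorem occ_phi_inv {d : ℕ} (hd : 3 ≤ d) {u : ℕ → ℕ} (hu : IsPhiFixed d u) (w : List ℕ)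
    (hw : ∀ x ∈ w, x < d) (n : ℕ) (h : OccursAt (phiW d w ++ [0]) u n) :
    ∃ k, n = PP d u k ∧ OccursAt w u k := by
  induction w generalizing n with
  | nil =>
    simp only [phiW_nil, List.nil_append, occ_cons] at h
    obtain ⟨k, hk⟩ := zero_block hd hu n h.1
    exact ⟨k, hk, occ_nil _ _⟩
  | cons x w ih =>
    rw [phiW_cons, List.append_assoc, occ_append] at h
    obtain ⟨k', hk', ho⟩ := ih (fun y hy => hw y (by simp [hy])) _ h.2
    have hx := hw x (by simp)
    have h1 := h.1
    have hz := u_P0 hu k'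
    rw [← hk'] at hz
    have key : ∃ k, n = PP d u k ∧ u k = x ∧ k' = k + 1 := by
      unfold phiL at h1 hk' hz
      split_ifs at h1 hk' hz with hxd
      · simp only [occ_cons] at h1
        obtain ⟨k, hk⟩ := zero_block hd hu n h1.1
        subst hk
        have e1 := u_P1 hu k
        have e3 := PP_succ d u k
        simp only [List.length_cons, List.length_nil] at hz hk'
        split_ifs at e1 e3 with hh
        · refine ⟨k, rfl, by omega, (PP_mono d u).injective (by omega)⟩
        · have := u_P2 hu k hh
          simp only [zero_add, Nat.reduceAdd] at hz
          omega
      · simp only [occ_cons] at h1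
        obtain ⟨k, hk⟩ := zero_block hd hu n h1.1
        subst hk
        have e3 := PP_succ d u k
        have e0 := u_P0 hu (k + 1)
        have := u_lt hd hu k
        simp only [List.length_cons, List.length_nil] at hz hk'
        split_ifs at e3 with hh
        · rw [e3] at e0
          have := h1.2.2.1
          rw [show PP d u k + 1 + 1 = PP d u k + 2 by omega] at this
          omega
        · refine ⟨k, rfl, by omega, (PP_mono d u).injective (by omega)⟩
    obtain ⟨k, rfl, hkx, rfl⟩ := key
    exact ⟨k, rfl, (occ_cons _ _ _ _).2 ⟨hkx, ho⟩⟩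

/-- images of common factors -/
theorem PP_common {d : ℕ} {u : ℕ → ℕ} (hu : IsPhiFixed d u) (k l m : ℕ)
    (h : ∀ t < m, u (k + t) = u (l + t)) :
    PP d u (k + m) + PP d u l = PP d u (l + m) + PP d u k ∧
      ∀ t < PP d u (k + m) - PP d u k, u (PP d u k + t) = u (PP d u l + t) := by
  have ho : OccursAt (seg u l m) u k := (occ_seg _ _ _ _).2 h
  have ho' : OccursAt (seg u l m) u l := (occ_seg _ _ _ _).2 (fun _ _ => rfl)
  obtain ⟨a1, a2⟩ := occ_phi hu _ _ ho
  obtain ⟨b1, b2⟩ := occ_phi hu _ _ ho'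
  rw [seg_length] at a2 b2
  refine ⟨by omega, fun t ht => ?_⟩
  rw [occ_iff] at a1 b1
  rw [← a1 t (by omega), ← b1 t (by omega)]

/-- every letter occurs -/
theorem letter_occ {d : ℕ} {u : ℕ → ℕ} (hu : IsPhiFixed d u) (i : ℕ) (hi : i ≤ d - 1) :
    ∃ k, u k = i := by
  induction i with
  | zero => exact ⟨0, hu.1⟩
  | succ i ih =>
    obtain ⟨k, hk⟩ := ih (by omega)
    refine ⟨PP d u k + 1, ?_⟩
    rw [u_P1 hu, if_pos (by omega), hk]

theorem last_zero {d : ℕ} (hd : 3 ≤ d) {u : ℕ → ℕ} (hu : IsPhiFixed d u) :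
    ∃ r, u r = d - 1 ∧ u (r + 1) = 0 := by
  obtain ⟨k, hk⟩ := letter_occ hu (d - 2) (by omega)
  refine ⟨PP d u k + 1, ?_, ?_⟩
  · rw [u_P1 hu, if_pos (by omega), hk]; omega
  · have := PP_succ d u k
    rw [if_pos (by omega)] at this
    rw [show PP d u k + 1 + 1 = PP d u (k + 1) by omega, u_P0 hu]

theorem left_key {d : ℕ} (hd : 3 ≤ d) {u : ℕ → ℕ} (hu : IsPhiFixed d u) (n : ℕ) :
    ∀ p q : ℕ, u p ≠ u q → (∀ t < n, u (p + 1 + t) = u (q + 1 + t)) →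
      ∃ r, u r = d - 1 ∧ (∀ t < n, u (r + 1 + t) = u (p + 1 + t)) ∧
        (u (p + 1 + n) = u (q + 1 + n) → u (r + 1 + n) = u (p + 1 + n)) ∧
        min (u (p + 1 + n)) (u (q + 1 + n)) ≤ u (r + 1 + n) := by
  induction n using Nat.strong_induction_on with
  | _ n ih =>
  intro p q hne hpq
  by_cases hp : u p = d - 1
  · exact ⟨p, hp, fun _ _ => rfl, fun _ => rfl, min_le_left _ _⟩
  by_cases hq : u q = d - 1
  · exact ⟨q, hq, fun t ht => (hpq t ht).symm, fun h => h.symm, min_le_right _ _⟩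
  have lp := u_lt hd hu p
  have lq := u_lt hd hu q
  rcases Nat.eq_zero_or_pos n with rfl | hn
  · obtain ⟨r, hr1, hr2⟩ := last_zero hd hu
    simp only [add_zero]
    refine ⟨r, hr1, by simp, ?_, ?_⟩
    · rw [hr2]
      intro h
      by_cases h0 : u p = 0
      · rw [h, mid_next hu q (by omega) (by omega)]
      · rw [mid_next hu p (by omega) (by omega)]
    · by_cases h0 : u p = 0
      · rw [mid_next hu q (by omega) (by omega)]; simp
      · rw [mid_next hu p (by omega) (by omega)]; simp
  have e0 : u (p + 1) = u (q + 1) := by simpa using hpq 0 hn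
  have z : u (p + 1) = 0 := by
    by_cases h0 : u p = 0
    · rw [e0, mid_next hu q (by omega) (by omega)]
    · rw [mid_next hu p (by omega) (by omega)]
  obtain ⟨k, hk⟩ := zero_block hd hu _ z
  obtain ⟨l, hl⟩ := zero_block hd hu _ (e0 ▸ z)
  have hkpos : k ≠ 0 := by rintro rfl; rw [PP_zero] at hk; omega
  have hlpos : l ≠ 0 := by rintro rfl; rw [PP_zero] at hl; omega
  obtain ⟨k, rfl⟩ := Nat.exists_eq_succ_of_ne_zero hkpos
  obtain ⟨l, rfl⟩ := Nat.exists_eq_succ_of_ne_zero hlpos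
  simp only [Nat.succ_eq_add_one] at hk hl
  have lk := u_last hu k
  have ll := u_last hu l
  rw [← hk, Nat.add_sub_cancel] at lk
  rw [← hl, Nat.add_sub_cancel] at ll
  have hne' : u k ≠ u l := by
    intro h; rw [h] at lk; omega
  -- the maximal `m`
  have hex : ∃ m, (∀ t < m, u (k + 1 + t) = u (l + 1 + t)) ∧
      PP d u (k + 1 + m) ≤ PP d u (k + 1) + n ∧
      ¬ (u (k + 1 + m) = u (l + 1 + m) ∧ PP d u (k + 1 + (m + 1)) ≤ PP d u (k + 1) + n) := by
    by_contra hcon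
    push Not at hcon
    have : ∀ m, (∀ t < m, u (k + 1 + t) = u (l + 1 + t)) ∧
      PP d u (k + 1 + m) ≤ PP d u (k + 1) + n := by
      intro m
      induction m with
      | zero => simp
      | succ m ihm =>
        obtain ⟨g1, g2⟩ := hcon m ihm.1 ihm.2
        refine ⟨fun t ht => ?_, g2⟩
        rcases Nat.lt_succ_iff_lt_or_eq.1 ht with h | rfl
        · exact ihm.1 t h
        · exact g1
    have h1 := (this (n + 1)).2
    have h2 := PP_add d u (k + 1) (n + 1)
    omega
  obtain ⟨m, hm1, hm2, hm3⟩ := hex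
  have hmn : m < n := by
    have := PP_add d u (k + 1) m
    omega
  obtain ⟨r0, i1, i2, i3, i4⟩ := ih m hmn k l hne' hm1
  obtain ⟨c1, c2⟩ := PP_common hu (k + 1) (l + 1) m hm1
  obtain ⟨f1, f2⟩ := PP_common hu (k + 1) (r0 + 1) m (fun t ht => (i2 t ht).symm)
  have hr := u_last hu r0
  rw [if_neg (by omega)] at hr
  have hrp : 1 ≤ PP d u (r0 + 1) := by
    have := PP_add d u 0 (r0 + 1)
    rw [zero_add] at this; omega
  obtain ⟨e, he⟩ : ∃ e, n = PP d u (k + 1 + m) - PP d u (k + 1) + e := 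
    ⟨n - (PP d u (k + 1 + m) - PP d u (k + 1)), by omega⟩
  have hmono := (PP_mono d u).monotone (show k + 1 ≤ k + 1 + m by omega)
  -- shifts
  have sk : ∀ t, p + 1 + (PP d u (k + 1 + m) - PP d u (k + 1) + t) = PP d u (k + 1 + m) + t := by
    intro t; omega
  have sl : ∀ t, q + 1 + (PP d u (k + 1 + m) - PP d u (k + 1) + t) = PP d u (l + 1 + m) + t := by
    intro t; omega
  have sr : ∀ t, PP d u (r0 + 1) - 1 + 1 + (PP d u (k + 1 + m) - PP d u (k + 1) + t)
      = PP d u (r0 + 1 + m) + t := by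
    intro t; omega
  have hwin : ∀ t < e, u (PP d u (k + 1 + m) + t) = u (PP d u (l + 1 + m) + t) := by
    intro t ht
    have := hpq (PP d u (k + 1 + m) - PP d u (k + 1) + t) (by omega)
    rwa [sk, sl] at this
  suffices hsuf : (∀ t < e, u (PP d u (r0 + 1 + m) + t) = u (PP d u (k + 1 + m) + t)) ∧
      (u (PP d u (k + 1 + m) + e) = u (PP d u (l + 1 + m) + e) →
        u (PP d u (r0 + 1 + m) + e) = u (PP d u (k + 1 + m) + e)) ∧
      min (u (PP d u (k + 1 + m) + e)) (u (PP d u (l + 1 + m) + e))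
        ≤ u (PP d u (r0 + 1 + m) + e) by
    refine ⟨PP d u (r0 + 1) - 1, hr, ?_, ?_⟩
    · intro t ht
      by_cases h : t < PP d u (k + 1 + m) - PP d u (k + 1)
      · rw [hk, f2 t h]; congr 1; omega
      · obtain ⟨t', rfl⟩ : ∃ t', t = PP d u (k + 1 + m) - PP d u (k + 1) + t' :=
          ⟨t - (PP d u (k + 1 + m) - PP d u (k + 1)), by omega⟩
        rw [sr, sk]
        exact hsuf.1 t' (by omega)
    · rw [he, sk, sl, sr]
      exact hsuf.2
  have hm3' : u (k + 1 + m) = u (l + 1 + m) → PP d u (k + 1) + n < PP d u (k + 1 + m + 1) := by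
    intro h
    by_contra hc
    exact hm3 ⟨h, by rw [← add_assoc]; omega⟩
  rw [PP_succ d u (k + 1 + m)] at hm3'
  generalize k + 1 + m = K at *
  generalize l + 1 + m = L at *
  generalize r0 + 1 + m = R at *
  have K0 := u_P0 hu K
  have L0 := u_P0 hu L
  have R0 := u_P0 hu R
  have K1 := u_P1 hu K
  have L1 := u_P1 hu L
  have R1 := u_P1 hu R
  have KK := u_lt hd hu K
  have LL := u_lt hd hu L
  have RR := u_lt hd hu R
  have third : ∀ X, u (PP d u X + 2) = if u X < d - 1 then 0 else d - 1 := by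
    intro X
    have hs := PP_succ d u X
    split_ifs at hs ⊢ with h
    · rw [← hs, u_P0 hu]
    · exact u_P2 hu X h
  have K2 := third K
  have L2 := third L
  have R2 := third R
  match e, he, hwin with
  | 0, he, hwin =>
    simp only [add_zero]
    refine ⟨by simp, by omega, by omega⟩
  | 1, he, hwin =>
    refine ⟨?_, ?_, ?_⟩
    · intro t ht
      obtain rfl : t = 0 := by omega
      simp only [add_zero]; omega
    · rw [K1, L1, R1]
      split_ifs <;> omega
    · rw [K1, L1, R1]
      split_ifs <;> omega
  | 2, he, hwin =>
    have w1 := hwin 1 (by omega)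
    have : u (PP d u R + 1) = u (PP d u K + 1) := by
      rw [K1, L1] at w1
      rw [K1, R1]
      by_cases hKL : u K = u L
      · rw [i3 hKL]
      · split_ifs at w1 ⊢ <;> omega
    refine ⟨?_, ?_, ?_⟩
    · intro t ht
      obtain rfl | rfl : t = 0 ∨ t = 1 := by omega
      · simp only [add_zero]; omega
      · exact this
    · rw [K1, L1] at w1
      rw [K2, L2, R2]
      intro h
      have hKL : u K = u L := by
        split_ifs at w1 h <;> omega
      rw [i3 hKL]
    · rw [K1, L1] at w1
      rw [K2, L2, R2]
      by_cases hKL : u K = u L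
      · rw [i3 hKL]; exact min_le_left _ _
      · split_ifs at w1 ⊢ <;> omega
  | e + 3, he, hwin =>
    exfalso
    have w1 := hwin 1 (by omega)
    have w2 := hwin 2 (by omega)
    rw [K1, L1] at w1
    rw [K2, L2] at w2
    have hKL : u K = u L := by
      split_ifs at w1 w2 <;> omega
    have := hm3' hKL
    split_ifs at this <;> omega

theorem left_special {d : ℕ} (hd : 3 ≤ d) {u : ℕ → ℕ} (hu : IsPhiFixed d u) (w : List ℕ)
    (i j : ℕ) (hij : i ≠ j) (hi : IsFactorS (i :: w) u) (hj : IsFactorS (j :: w) u) :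
    IsFactorS ((d - 1) :: w) u := by
  obtain ⟨p, hp⟩ := hi
  obtain ⟨q, hq⟩ := hj
  rw [occ_cons] at hp hq
  have h1 := (occ_iff _ _ _).1 hp.2
  have h2 := (occ_iff _ _ _).1 hq.2
  obtain ⟨r, hr1, hr2, -⟩ := left_key hd hu w.length p q (by omega)
    (fun t ht => by rw [← h1 t ht, ← h2 t ht])
  exact ⟨r, (occ_cons _ _ _ _).2 ⟨hr1, occ_transfer hp.2 hr2⟩⟩

/-- palindromic prefixes -/
def GG (d : ℕ) : ℕ → List ℕ
  | 0 => [0]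
  | n + 1 => phiW d (GG d n) ++ [0]

theorem phiW_reverse (d : ℕ) (w : List ℕ) :
    (phiW d w ++ [0]).reverse = phiW d w.reverse ++ [0] := by
  induction w with
  | nil => rfl
  | cons x w ih =>
    rw [phiW_cons, List.append_assoc, List.reverse_append, ih, List.reverse_cons, phiW_append,
      phiW_cons, phiW_nil, List.append_assoc, List.append_assoc]
    congr 1
    unfold phiL
    split_ifs <;> simp

theorem GG_pal (d n : ℕ) : (GG d n).reverse = GG d n := by
  induction n with
  | zero => rfl
  | succ n ih => rw [GG, phiW_reverse, ih]

theorem GG_occ {d : ℕ} {u : ℕ → ℕ} (hu : IsPhiFixed d u) (n : ℕ) : OccursAt (GG d n) u 0 := by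
  induction n with
  | zero => exact (occ_cons _ _ _ _).2 ⟨hu.1, occ_nil _ _⟩
  | succ n ih =>
    obtain ⟨h1, h2⟩ := occ_phi hu _ _ ih
    rw [GG, occ_append]
    rw [PP_zero] at h1 h2
    refine ⟨h1, (occ_cons _ _ _ _).2 ⟨?_, occ_nil _ _⟩⟩
    rw [← h2, u_P0 hu]

theorem phiW_length (d : ℕ) (w : List ℕ) : w.length ≤ (phiW d w).length := by
  induction w with
  | nil => simp
  | cons x w ih =>
    rw [phiW_cons, List.length_append, List.length_cons]
    have : 1 ≤ (phiL d x).length := by unfold phiL; split_ifs <;> simp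
    omega

theorem GG_length (d n : ℕ) : n < (GG d n).length := by
  induction n with
  | zero => simp [GG]
  | succ n ih =>
    have := phiW_length d (GG d n)
    simp only [GG, List.length_append, List.length_cons, List.length_nil]
    omega

theorem factor_sub {u : ℕ → ℕ} {v w : List ℕ} (hw : IsFactorS w u) (h : v <:+: w) :
    IsFactorS v u := by
  obtain ⟨x, y, rfl⟩ := h
  obtain ⟨j, hj⟩ := hw
  rw [occ_append, occ_append] at hj
  exact ⟨_, hj.1.2⟩

theorem factor_reverse {d : ℕ} {u : ℕ → ℕ} (hu : IsPhiFixed d u) (w : List ℕ)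
    (hw : IsFactorS w u) : IsFactorS w.reverse u := by
  obtain ⟨j, hj⟩ := hw
  have hG := GG_occ hu (j + w.length)
  have hl := GG_length d (j + w.length)
  have hin : w <:+: GG d (j + w.length) := by
    have : w = ((GG d (j + w.length)).drop j).take w.length := by
      apply List.ext_getElem
      · simp; omega
      · intro t h1 h2
        rw [occ_iff] at hj hG
        rw [hj t h1, List.getElem_take, List.getElem_drop, hG _ (by omega), zero_add]
    have h2 : ((GG d (j + w.length)).drop j).take w.length <:+: GG d (j + w.length) :=
      (List.take_prefix _ _).isInfix.trans (List.drop_suffix _ _).isInfix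
    rwa [← this] at h2
  apply factor_sub ⟨0, hG⟩
  rw [← GG_pal]
  exact List.reverse_infix.2 hin

theorem right_special {d : ℕ} (hd : 3 ≤ d) {u : ℕ → ℕ} (hu : IsPhiFixed d u) (w : List ℕ)
    (i j : ℕ) (hij : i ≠ j) (hi : IsFactorS (w ++ [i]) u) (hj : IsFactorS (w ++ [j]) u) :
    IsFactorS (w ++ [d - 1]) u := by
  have h1 := factor_reverse hu _ hi
  have h2 := factor_reverse hu _ hj
  simp only [List.reverse_append, List.reverse_cons, List.reverse_nil, List.nil_append,
    List.singleton_append] at h1 h2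
  have h3 := factor_reverse hu _ (left_special hd hu _ i j hij h1 h2)
  simpa using h3

/-- beginnings recur -/
theorem recur_start {d : ℕ} (hd : 3 ≤ d) {u : ℕ → ℕ} (hu : IsPhiFixed d u) (m : ℕ) :
    ∃ p, 1 ≤ p ∧ ∀ t < m + 1, u (p + t) = u t := by
  induction m with
  | zero =>
    refine ⟨PP d u 1, ?_, ?_⟩
    · have := PP_add d u 0 1
      rw [zero_add] at this; omega
    · intro t ht
      obtain rfl : t = 0 := by omega
      rw [add_zero, u_P0 hu, hu.1]
  | succ m ih =>
    obtain ⟨p, hp1, hp⟩ := ih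
    obtain ⟨c1, c2⟩ := PP_common hu p 0 (m + 1) (fun t ht => by rw [zero_add]; exact hp t ht)
    have h1 := PP_add d u 0 p
    have h2 := PP_add d u p (m + 1)
    rw [zero_add] at h1
    refine ⟨PP d u p, by omega, fun t ht => ?_⟩
    rw [c2 t (by omega), PP_zero, zero_add]

theorem left_ext {d : ℕ} (hd : 3 ≤ d) {u : ℕ → ℕ} (hu : IsPhiFixed d u) (w : List ℕ) (a : ℕ)
    (ha : a < d - 1) (hL : (Lext u w).ncard = 2) (haw : IsFactorS (a :: w) u) (k : ℕ)
    (hk : OccursAt w u (k + 1)) : u k = a ∨ u k = d - 1 := by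
  by_contra hcon
  push Not at hcon
  have h1 : IsFactorS (u k :: w) u := ⟨k, (occ_cons _ _ _ _).2 ⟨rfl, hk⟩⟩
  have h2 := left_special hd hu w _ _ hcon.1 h1 haw
  obtain ⟨x, y, hxy, hS⟩ := Set.ncard_eq_two.1 hL
  have m1 : (u k :: w) ∈ Lext u w := ⟨_, rfl, h1⟩
  have m2 : (a :: w) ∈ Lext u w := ⟨_, rfl, haw⟩
  have m3 : ((d - 1) :: w) ∈ Lext u w := ⟨_, rfl, h2⟩
  have n1 : (u k :: w) ≠ (a :: w) := by simp [hcon.1]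
  have n2 : (u k :: w) ≠ ((d - 1) :: w) := by simp [hcon.2]
  have n3 : (a :: w) ≠ ((d - 1) :: w) := by simp; omega
  rw [hS] at m1 m2 m3
  simp only [Set.mem_insert_iff, Set.mem_singleton_iff] at m1 m2 m3
  rcases m1 with m1 | m1 <;> rcases m2 with m2 | m2 <;> rcases m3 with m3 | m3 <;>
    simp_all

theorem right_ext {d : ℕ} (hd : 3 ≤ d) {u : ℕ → ℕ} (hu : IsPhiFixed d u) (w : List ℕ) (b : ℕ)
    (hb : b < d - 1) (hR : (Rext u w).ncard = 2) (hbw : IsFactorS (w ++ [b]) u) (k : ℕ)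
    (hk : OccursAt w u k) : u (k + w.length) = b ∨ u (k + w.length) = d - 1 := by
  by_contra hcon
  push Not at hcon
  have h1 : IsFactorS (w ++ [u (k + w.length)]) u :=
    ⟨k, (occ_append _ _ _ _).2 ⟨hk, (occ_cons _ _ _ _).2 ⟨rfl, occ_nil _ _⟩⟩⟩
  have h2 := right_special hd hu w _ _ hcon.1 h1 hbw
  obtain ⟨x, y, hxy, hS⟩ := Set.ncard_eq_two.1 hR
  have m1 : (w ++ [u (k + w.length)]) ∈ Rext u w := ⟨_, rfl, h1⟩
  have m2 : (w ++ [b]) ∈ Rext u w := ⟨_, rfl, hbw⟩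
  have m3 : (w ++ [d - 1]) ∈ Rext u w := ⟨_, rfl, h2⟩
  have n1 : (w ++ [u (k + w.length)]) ≠ (w ++ [b]) := by simp [hcon.1]
  have n2 : (w ++ [u (k + w.length)]) ≠ (w ++ [d - 1]) := by simp [hcon.2]
  have n3 : (w ++ [b]) ≠ (w ++ [d - 1]) := by simp; omega
  rw [hS] at m1 m2 m3
  simp only [Set.mem_insert_iff, Set.mem_singleton_iff] at m1 m2 m3
  rcases m1 with m1 | m1 <;> rcases m2 with m2 | m2 <;> rcases m3 with m3 | m3 <;>
    simp_all

theorem s_eq {d : ℕ} (hd : 3 ≤ d) (a : ℕ) (ha : a < d - 1) (s : List ℕ)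
    (hs1 : s <:+ phiW d [a]) (hs2 : s <:+ phiW d [d - 1])
    (hs3 : ∀ t : List ℕ, t <:+ phiW d [a] → t <:+ phiW d [d - 1] → t <:+ s) :
    s = if a = d - 2 then [d - 1] else [] := by
  have e1 : phiW d [a] = [0, a + 1] := by simp [phiW, phiL, ha]
  have e2 : phiW d [d - 1] = [0, d - 1, d - 1] := by simp [phiW, phiL]
  rw [e1] at hs1 hs3
  rw [e2] at hs2 hs3
  simp only [List.suffix_cons_iff, List.suffix_nil] at hs1 hs2
  split_ifs with h
  · have h3 := hs3 [d - 1] ⟨[0], by simp; omega⟩ ⟨[0, d - 1], by simp⟩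
    rcases hs1 with rfl | rfl | rfl
    · simp at hs2; omega
    · simp; omega
    · simp at h3
  · rcases hs1 with rfl | rfl | rfl
    · simp at hs2; omega
    · simp at hs2; omega
    · rfl

theorem count_phiW (d : ℕ) (r : List ℕ) (hr : ∀ x ∈ r, x < d) (i : Fin d) :
    (phiW d r).count (i : ℕ) = ((Mmat d).mulVec (parikh d r)) i := by
  induction r with
  | nil => simp [phiW, Matrix.mulVec, dotProduct, parikh]
  | cons x r ih =>
    have hx := hr x (by simp)
    rw [phiW_cons, List.count_append, ih (fun y hy => hr y (by simp [hy]))]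
    have : parikh d (x :: r) = Pi.single (⟨x, hx⟩ : Fin d) 1 + parikh d r := by
      funext j
      simp only [parikh, Pi.add_apply, List.count_cons, Pi.single_apply, Fin.ext_iff]
      by_cases h : x = (j : ℕ)
      · simp [h, add_comm]
      · simp [h, Ne.symm h]
    rw [this, Matrix.mulVec_add, Pi.add_apply]
    simp [Mmat]

/-- Let `d ≥ 3` and `(a,w,b) ∈ 𝒯` with `w` having exactly two left and two
right extensions. Let `w′` be the offspring of `w` and `s` the longest common suffix of
`φ(a)` and `φ(d−1)`. If `r` is a return word to `w` in `u_d`, then `sφ(r)` has `s` as a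
suffix and the word `r′` with `r′s = sφ(r)` is a return word to `w′` in `u_d`; its Parikh
vector equals `M r⃗`, where `M` is the incidence matrix of `φ_d`. -/
theorem statement13 (d : ℕ) (hd : 3 ≤ d) (u : ℕ → ℕ) (hu : IsPhiFixed d u)
    (a b : ℕ) (w : List ℕ) (ht : TripleMem d u (a, w, b))
    (hL : (Lext u w).ncard = 2) (hR : (Rext u w).ncard = 2)
    (r : List ℕ) (hr : ReturnWord u w r)
    (s : List ℕ) (hs1 : s <:+ phiW d [a]) (hs2 : s <:+ phiW d [d - 1])
    (hs3 : ∀ t : List ℕ, t <:+ phiW d [a] → t <:+ phiW d [d - 1] → t <:+ s) :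
    ∃ r' : List ℕ, r' ++ s = s ++ phiW d r ∧
      ReturnWord u (fmap d (a, w, b)).2.1 r' ∧
      parikh d r' = (Mmat d).mulVec (parikh d r) := by
  obtain ⟨⟨hwf, -, -⟩, ha, hb, haw, hwb⟩ := ht
  simp only at hwf ha hb haw hwb
  have hs := s_eq hd a ha s hs1 hs2 hs3
  clear hs1 hs2 hs3
  have hwd : ∀ x ∈ w, x < d := by
    obtain ⟨j, hj⟩ := hwf
    intro x hx
    obtain ⟨t, ht, rfl⟩ := List.getElem_of_mem hx
    rw [(occ_iff _ _ _).1 hj t ht]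
    exact u_lt hd hu _
  -- the return word occurs at a positive position
  have hr' : ∃ j ℓ : ℕ, 1 ≤ j ∧ j < ℓ ∧ OccursAt w u j ∧ OccursAt w u ℓ ∧
      (∀ m, j < m → m < ℓ → ¬ OccursAt w u m) ∧ r = seg u j (ℓ - j) := by
    obtain ⟨j, ℓ, h1, h2, h3, h4, h5⟩ := hr
    obtain ⟨p, hp1, hp⟩ := recur_start hd hu (ℓ + w.length)
    refine ⟨p + j, p + ℓ, by omega, by omega, ?_, ?_, ?_, ?_⟩
    · exact occ_transfer h2 (fun t ht => by rw [add_assoc, hp _ (by omega)])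
    · exact occ_transfer h3 (fun t ht => by rw [add_assoc, hp _ (by omega)])
    · intro m hm1 hm2 ho
      obtain ⟨m, rfl⟩ : ∃ m', m = p + m' := ⟨m - p, by omega⟩
      exact h4 m (by omega) (by omega)
        (occ_transfer ho (fun t ht => by rw [add_assoc, hp _ (by omega)]))
    · rw [h5, seg, show p + ℓ - (p + j) = ℓ - j by omega]
      apply List.map_congr_left
      intro t ht
      rw [List.mem_range] at ht
      rw [add_assoc, hp _ (by omega)]
  obtain ⟨j, ℓ, hj1, hjl, hj, hl, hno, hrr⟩ := hr'
  have hPpos : ∀ k, 1 ≤ k → 2 ≤ PP d u k := by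
    intro k hk
    have := PP_add d u 0 k
    rw [zero_add] at this; omega
  have hslen : s.length ≤ 1 := by rw [hs]; split_ifs <;> simp
  -- `s` occurs before the image of each occurrence of `w`
  have hsocc : ∀ k, 1 ≤ k → OccursAt w u k → OccursAt s u (PP d u k - s.length) := by
    intro k hk ho
    obtain ⟨k, rfl⟩ : ∃ k', k = k' + 1 := ⟨k - 1, by omega⟩
    have := left_ext hd hu w a ha hL haw k ho
    have hlast := u_last hu k
    rw [hs]
    split_ifs with h
    · refine (occ_cons _ _ _ _).2 ⟨?_, occ_nil _ _⟩
      simp only [List.length_cons, List.length_nil, zero_add]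
      rw [hlast]
      split_ifs <;> omega
    · exact occ_nil _ _
  have hw' : (fmap d (a, w, b)).2.1 =
      s ++ ((phiW d w ++ [0]) ++ if b = d - 2 then [d - 1] else []) := by
    simp only [fmap, hs, List.append_assoc]
  have hocc : ∀ k, 1 ≤ k → OccursAt w u k →
      OccursAt (fmap d (a, w, b)).2.1 u (PP d u k - s.length) := by
    intro k hk ho
    have hp := hPpos k hk
    rw [hw', occ_append, show PP d u k - s.length + s.length = PP d u k by omega, occ_append,
      occ_append]
    obtain ⟨g1, g2⟩ := occ_phi hu w k ho
    refine ⟨hsocc k hk ho, ⟨g1, ?_⟩, ?_⟩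
    · rw [← g2]
      exact (occ_cons _ _ _ _).2 ⟨u_P0 hu _, occ_nil _ _⟩
    · rw [List.length_append, ← add_assoc, ← g2]
      split_ifs with h
      · refine (occ_cons _ _ _ _).2 ⟨?_, occ_nil _ _⟩
        have := right_ext hd hu w b hb hR hwb k ho
        simp only [List.length_cons, List.length_nil, zero_add]
        rw [u_P1 hu]
        split_ifs <;> omega
      · exact occ_nil _ _
  have hpj := hPpos j hj1
  have hpl := hPpos ℓ (by omega)
  have hlt := PP_mono d u hjl
  have hrocc : OccursAt r u j := by
    rw [hrr, occ_seg]; exact fun _ _ => rfl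
  have hrlen : r.length = ℓ - j := by rw [hrr, seg_length]
  obtain ⟨g1, g2⟩ := occ_phi hu r j hrocc
  rw [hrlen, show j + (ℓ - j) = ℓ by omega] at g2
  have heq : seg u (PP d u j - s.length) (PP d u ℓ - PP d u j) ++ s = s ++ phiW d r := by
    have A1 : OccursAt (seg u (PP d u j - s.length) (PP d u ℓ - PP d u j) ++ s) u
        (PP d u j - s.length) := by
      rw [occ_append, occ_seg, seg_length]
      refine ⟨fun _ _ => rfl, ?_⟩
      rw [show PP d u j - s.length + (PP d u ℓ - PP d u j) = PP d u ℓ - s.length by omega]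
      exact hsocc ℓ (by omega) hl
    have A2 : OccursAt (s ++ phiW d r) u (PP d u j - s.length) := by
      rw [occ_append, show PP d u j - s.length + s.length = PP d u j by omega]
      exact ⟨hsocc j hj1 hj, g1⟩
    rw [occ_eq_seg A1, occ_eq_seg A2]
    congr 1
    simp only [List.length_append, seg_length]
    omega
  refine ⟨_, heq, ?_, ?_⟩
  · refine ⟨PP d u j - s.length, PP d u ℓ - s.length, by omega, hocc j hj1 hj,
      hocc ℓ (by omega) hl, ?_, ?_⟩
    · intro m hm1 hm2 ho
      rw [hw', occ_append, occ_append] at ho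
      obtain ⟨k, hk, hko⟩ := occ_phi_inv hd hu w hwd _ ho.2.1
      exact hno k ((PP_mono d u).lt_iff_lt.1 (by omega)) ((PP_mono d u).lt_iff_lt.1 (by omega)) hko
    · rw [show PP d u ℓ - s.length - (PP d u j - s.length) = PP d u ℓ - PP d u j by omega]
      rfl
  · funext i
    rw [← count_phiW d r ?_ i]
    · have := congrArg (List.count (i : ℕ)) heq
      simp only [List.count_append] at this
      simp only [parikh]
      omega
    · intro x hx
      rw [hrr, seg, List.mem_map] at hx
      obtain ⟨t, -, rfl⟩ := hx
      exact u_lt hd hu _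
end RichRT
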